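/- Let K be a field of characteristic not 2 and not 3. Let P be a multilinear polynomial of degree 4 in one formal bilinear operation such that, in every alternative dialgebra over K, P vanishes identically when the formal operation is interpreted as the dicommutator ⟨a,b⟩ = a ⊣ b − b ⊢ a. Then P vanishes identically in every Malcev dialgebra over K; that is, P is a consequence of right anticommutativity and the di-Malcev identity. -/

import Mathlib

/-- Formal monomials of a single binary operation in variables `x_0, …, x_{n-1}`:
binary trees whose leaves are labelled by variables. -/
inductive BTree (n : ℕ) : Type
  | leaf : Fin n → BTree n
  | node : BTree n → BTree n → BTree n

namespace BTree

/-- Evaluate a monomial in an algebra with binary operation `m`,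
assigning the value `x i` to the variable `i`. -/
def eval {n : ℕ} {V : Type} (m : V → V → V) (x : Fin n → V) : BTree n → V
  | leaf i => x i
  | node s t => m (eval m x s) (eval m x t)

/-- The multiset of variables occurring in a monomial. -/
def vars {n : ℕ} : BTree n → Multiset (Fin n)
  | leaf i => {i}
  | node s t => vars s + vars t

/-- A monomial of degree `n` is multilinear if each of the `n` variables
occurs in it exactly once. -/
def Multilinear {n : ℕ} (t : BTree n) : Prop :=
  vars t = (Finset.univ : Finset (Fin n)).val

end BTree

/-- Indices of the standard basis of the octonions, seen as a twisted group algebra of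
`(ℤ/2ℤ)³`. -/
abbrev OctIndex : Type := Fin 2 × Fin 2 × Fin 2

namespace OctIndex

/-- The sign in the product of two octonion basis elements. -/
def sign (i j : OctIndex) : ℤ :=
  if i.1 * (j.1 + j.2.1 + j.2.2) + i.2.1 * (j.2.1 + j.2.2) + i.2.2 * j.2.2
    + j.1 * i.2.1 * i.2.2 + i.1 * j.2.1 * i.2.2 + i.1 * i.2.1 * j.2.2 = 0 then 1 else -1

/-- The structure constant of the associator of three octonion basis elements. -/
def assocSign (i j k : OctIndex) : ℤ :=
  sign i j * sign (i + j) k - sign j k * sign i (j + k)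

lemma assocSign_swap_left (i j k : OctIndex) : assocSign i j k + assocSign j i k = 0 := by
  revert i j k; decide +kernel

lemma assocSign_swap_right (i j k : OctIndex) : assocSign i j k + assocSign i k j = 0 := by
  revert i j k; decide +kernel

end OctIndex

/-- The octonions over `K`, as formal combinations of basis elements. -/
abbrev Oct (K : Type) [Field K] : Type := OctIndex →₀ K

namespace Oct

open Finsupp OctIndex

variable {K : Type} [Field K]

/-- Octonion multiplication. -/
noncomputable def mul : Oct K →ₗ[K] Oct K →ₗ[K] Oct K :=
  linearCombination K fun i => linearCombination K fun j => single (i + j) (sign i j : K)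

lemma mul_single_single (i j : OctIndex) (x y : K) :
    mul (single i x) (single j y) = single (i + j) (x * y * (sign i j : K)) := by
  simp only [mul, linearCombination_single, LinearMap.smul_apply, smul_single, smul_eq_mul,
    mul_assoc]

/-- The associator of the octonions. -/
noncomputable def assoc (a b c : Oct K) : Oct K := mul (mul a b) c - mul a (mul b c)

lemma assoc_single (i j k : OctIndex) (x y z : K) :
    assoc (single i x) (single j y) (single k z)
      = single (i + j + k) (x * y * z * (assocSign i j k : K)) := by
  simp only [assoc, mul_single_single, ← add_assoc, ← single_sub, assocSign]
  congr 1
  push_cast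
  ring

lemma assoc_swap_left (a b c : Oct K) : assoc a b c + assoc b a c = 0 := by
  induction a using Finsupp.induction_linear with
  | zero => simp [assoc]
  | add a a' h h' =>
    simp only [assoc, map_add, LinearMap.add_apply] at h h' ⊢
    linear_combination (norm := module) h + h'
  | single i x =>
    induction b using Finsupp.induction_linear with
    | zero => simp [assoc]
    | add b b' h h' =>
      simp only [assoc, map_add, LinearMap.add_apply] at h h' ⊢
      linear_combination (norm := module) h + h'
    | single j y =>
      induction c using Finsupp.induction_linear with
      | zero => simp [assoc]
      | add c c' h h' =>
        simp only [assoc, map_add] at h h' ⊢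
        linear_combination (norm := module) h + h'
      | single k z =>
        have key := congrArg (Int.cast : ℤ → K) (assocSign_swap_left i j k)
        push_cast at key
        rw [assoc_single, assoc_single, add_comm j i, ← single_add, single_eq_zero]
        linear_combination x * y * z * key

lemma assoc_swap_right (a b c : Oct K) : assoc a b c + assoc a c b = 0 := by
  induction a using Finsupp.induction_linear with
  | zero => simp [assoc]
  | add a a' h h' =>
    simp only [assoc, map_add, LinearMap.add_apply] at h h' ⊢
    linear_combination (norm := module) h + h'
  | single i x =>
    induction b using Finsupp.induction_linear with
    | zero => simp [assoc]
    | add b b' h h' =>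
      simp only [assoc, map_add, LinearMap.add_apply] at h h' ⊢
      linear_combination (norm := module) h + h'
    | single j y =>
      induction c using Finsupp.induction_linear with
      | zero => simp [assoc]
      | add c c' h h' =>
        simp only [assoc, map_add, LinearMap.add_apply] at h h' ⊢
        linear_combination (norm := module) h + h'
      | single k z =>
        have key := congrArg (Int.cast : ℤ → K) (assocSign_swap_right i j k)
        push_cast at key
        rw [assoc_single, assoc_single, add_right_comm i k j, ← single_add, single_eq_zero]
        linear_combination x * y * z * key

/-- The left product of the alternative dialgebra `Oct K × Oct K`: the first factor acts on the
second one, regarded as its regular bimodule. -/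
noncomputable def left : Oct K × Oct K →ₗ[K] Oct K × Oct K →ₗ[K] Oct K × Oct K :=
  LinearMap.mk₂ K (fun a b => (mul a.1 b.1, mul a.2 b.1))
    (by simp) (by simp) (by simp) (by simp)

/-- The right product of the alternative dialgebra `Oct K × Oct K`. -/
noncomputable def right : Oct K × Oct K →ₗ[K] Oct K × Oct K →ₗ[K] Oct K × Oct K :=
  LinearMap.mk₂ K (fun a b => (mul a.1 b.1, mul a.1 b.2))
    (by simp) (by simp) (by simp) (by simp)

lemma left_apply (a b : Oct K × Oct K) : left a b = (mul a.1 b.1, mul a.2 b.1) := rfl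

lemma right_apply (a b : Oct K × Oct K) : right a b = (mul a.1 b.1, mul a.1 b.2) := rfl

lemma assoc_left_add_assoc_right (a b c : Oct K × Oct K) :
    (left (left a b) c - left a (left b c))
      + (right (right c b) a - right c (right b a)) = 0 := by
  have key (u v w : Oct K) : assoc u v w + assoc w v u = 0 := by
    linear_combination (norm := module) assoc_swap_left u v w - assoc_swap_right v u w
      + assoc_swap_left v w u
  exact Prod.ext (key a.1 b.1 c.1) (key a.2 b.1 c.1)

lemma assoc_left_sub_assoc_right (a b c : Oct K × Oct K) :
    (left (left a b) c - left a (left b c))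
      - (right (right b c) a - right b (right c a)) = 0 := by
  have key (u v w : Oct K) : assoc u v w - assoc v w u = 0 := by
    linear_combination (norm := module) assoc_swap_left u v w - assoc_swap_right v u w
  exact Prod.ext (key a.1 b.1 c.1) (key a.2 b.1 c.1)

lemma assoc_inner_add_assoc_right (a b c : Oct K × Oct K) :
    (left (right a b) c - right a (left b c))
      + (right (right a c) b - right a (right c b)) = 0 :=
  Prod.ext (assoc_swap_right a.1 b.1 c.1) (assoc_swap_right a.1 b.2 c.1)

/-- An integer multiple of an octonion basis element, together with a mark. -/
abbrev MarkedUnit : Type := ℤ × OctIndex × ℤ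

/-- The commutator of integer multiples of octonion basis elements; the result carries the mark
of the left factor. -/
def markedComm (u v : MarkedUnit) : MarkedUnit :=
  (u.1 * v.1 * (sign u.2.1 v.2.1 - sign v.2.1 u.2.1), u.2.1 + v.2.1, u.2.2)

/-- The coefficient of the second component of `ofMarkedUnit u`. -/
def weight (u : MarkedUnit) : ℤ := u.2.2 * u.1

/-- The element of the dialgebra `Oct K × Oct K` given by a marked unit. -/
noncomputable def ofMarkedUnit (u : MarkedUnit) : Oct K × Oct K :=
  (single u.2.1 (u.1 : K), single u.2.1 (weight u : K))

lemma dicommutator_ofMarkedUnit (u v : MarkedUnit) :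
    left (ofMarkedUnit (K := K) u) (ofMarkedUnit v) - right (ofMarkedUnit v) (ofMarkedUnit u)
      = ofMarkedUnit (markedComm u v) := by
  simp only [left_apply, right_apply, ofMarkedUnit, mul_single_single, Prod.mk_sub_mk,
    add_comm v.2.1, ← single_sub, markedComm, weight]
  congr 2 <;> push_cast <;> ring

lemma eval_dicommutator {n : ℕ} (y : Fin n → MarkedUnit) (t : BTree n) :
    BTree.eval (fun a b => left a b - right b a) (fun i => ofMarkedUnit (K := K) (y i)) t
      = ofMarkedUnit (BTree.eval markedComm y t) := by
  induction t with
  | leaf i => rfl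
  | node s t hs ht => simp only [BTree.eval, hs, ht, dicommutator_ofMarkedUnit]

end Oct

namespace BTree

variable {n : ℕ}

lemma card_vars_pos (t : BTree n) : 0 < t.vars.card := by
  induction t with
  | leaf i => simp [vars]
  | node s t hs ht => simp only [vars, Multiset.card_add]; omega

lemma eq_leaf_of_card_vars {t : BTree n} (h : t.vars.card = 1) : ∃ i, t = leaf i := by
  cases t with
  | leaf i => exact ⟨i, rfl⟩
  | node s t =>
    have := s.card_vars_pos
    have := t.card_vars_pos
    simp only [vars, Multiset.card_add] at h
    omega

lemma eq_node_of_card_vars_two {t : BTree n} (h : t.vars.card = 2) :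
    ∃ i j, t = node (leaf i) (leaf j) := by
  cases t with
  | leaf i => simp [vars] at h
  | node s t =>
    have := s.card_vars_pos
    have := t.card_vars_pos
    simp only [vars, Multiset.card_add] at h
    obtain ⟨i, rfl⟩ := s.eq_leaf_of_card_vars (by omega)
    obtain ⟨j, rfl⟩ := t.eq_leaf_of_card_vars (by omega)
    exact ⟨i, j, rfl⟩

lemma eq_node_of_card_vars_three {t : BTree n} (h : t.vars.card = 3) :
    ∃ i j k, t = node (node (leaf i) (leaf j)) (leaf k)
      ∨ t = node (leaf i) (node (leaf j) (leaf k)) := by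
  cases t with
  | leaf i => simp [vars] at h
  | node s t =>
    have := s.card_vars_pos
    have := t.card_vars_pos
    simp only [vars, Multiset.card_add] at h
    obtain hs | hs : s.vars.card = 1 ∨ s.vars.card = 2 := by omega
    · obtain ⟨i, rfl⟩ := s.eq_leaf_of_card_vars hs
      obtain ⟨j, k, rfl⟩ := t.eq_node_of_card_vars_two (by omega)
      exact ⟨i, j, k, .inr rfl⟩
    · obtain ⟨i, j, rfl⟩ := s.eq_node_of_card_vars_two hs
      obtain ⟨k, rfl⟩ := t.eq_leaf_of_card_vars (by omega)
      exact ⟨i, j, k, .inl rfl⟩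

/-- The five association types of degree 4, with leaves labelled by `p`. -/
def shape (p : Fin 4 → Fin n) : Fin 5 → BTree n :=
  ![node (node (node (leaf (p 0)) (leaf (p 1))) (leaf (p 2))) (leaf (p 3)),
    node (node (leaf (p 0)) (node (leaf (p 1)) (leaf (p 2)))) (leaf (p 3)),
    node (node (leaf (p 0)) (leaf (p 1))) (node (leaf (p 2)) (leaf (p 3))),
    node (leaf (p 0)) (node (node (leaf (p 1)) (leaf (p 2))) (leaf (p 3))),
    node (leaf (p 0)) (node (leaf (p 1)) (node (leaf (p 2)) (leaf (p 3))))]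

lemma eq_shape_of_card_vars {t : BTree n} (h : t.vars.card = 4) :
    ∃ p s, t = shape p s := by
  cases t with
  | leaf i => simp [vars] at h
  | node s t =>
    have := s.card_vars_pos
    have := t.card_vars_pos
    simp only [vars, Multiset.card_add] at h
    obtain hs | hs | hs : s.vars.card = 1 ∨ s.vars.card = 2 ∨ s.vars.card = 3 := by omega
    · obtain ⟨i, rfl⟩ := s.eq_leaf_of_card_vars hs
      obtain ⟨j, k, l, rfl | rfl⟩ := t.eq_node_of_card_vars_three (by omega)
      · exact ⟨![i, j, k, l], 3, rfl⟩
      · exact ⟨![i, j, k, l], 4, rfl⟩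
    · obtain ⟨i, j, rfl⟩ := s.eq_node_of_card_vars_two hs
      obtain ⟨k, l, rfl⟩ := t.eq_node_of_card_vars_two (by omega)
      exact ⟨![i, j, k, l], 2, rfl⟩
    · obtain ⟨l, rfl⟩ := t.eq_leaf_of_card_vars (by omega)
      obtain ⟨i, j, k, rfl | rfl⟩ := s.eq_node_of_card_vars_three hs
      · exact ⟨![i, j, k, l], 0, rfl⟩
      · exact ⟨![i, j, k, l], 1, rfl⟩

lemma vars_shape (p : Fin 4 → Fin n) (s : Fin 5) :
    (shape p s).vars = Finset.univ.val.map p := by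
  have h : (Finset.univ : Finset (Fin 4)).val.map p = {p 0} + {p 1} + {p 2} + {p 3} := rfl
  rw [h]
  fin_cases s <;> simp [shape, vars, -Multiset.singleton_add] <;> abel

lemma Multilinear.exists_perm {t : BTree 4} (h : t.Multilinear) :
    ∃ (p : Equiv.Perm (Fin 4)) (s : Fin 5), t = shape p s := by
  obtain ⟨p, s, rfl⟩ := eq_shape_of_card_vars (t := t) (by rw [h]; rfl)
  have hp : Function.Injective p := by
    have hnd : (Finset.univ.val.map p).Nodup := by
      rw [← vars_shape p s, h]
      exact Finset.univ.nodup
    exact fun a b hab => Multiset.inj_on_of_nodup_map hnd a (by simp) b (by simp) hab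
  exact ⟨Equiv.ofBijective p (Finite.injective_iff_bijective.mp hp), s, rfl⟩

lemma eval_shape_comp {V : Type} (m : V → V → V) (x : Fin n → V) (p : Fin 4 → Fin n)
    (s : Fin 5) : eval m x (shape p s) = eval m (x ∘ p) (shape id s) := by
  fin_cases s <;> rfl

end BTree

namespace Oct

/-- Quadruples of octonion basis elements whose first entry is marked. Permuting the entries of
each of them gives enough values to separate the multilinear Malcev monomials of degree 4. -/
def testUnits : Fin 5 → Fin 4 → MarkedUnit :=
  ![![(1, (1, 0, 0), 1), (1, (1, 0, 0), 0), (1, (0, 1, 0), 0), (1, (1, 1, 0), 0)],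
    ![(1, (1, 0, 0), 1), (1, (1, 0, 0), 0), (1, (0, 1, 0), 0), (1, (0, 0, 1), 0)],
    ![(1, (1, 0, 0), 1), (1, (0, 1, 0), 0), (1, (0, 1, 0), 0), (1, (1, 1, 0), 0)],
    ![(1, (1, 0, 0), 1), (1, (0, 1, 0), 0), (1, (0, 1, 0), 0), (1, (0, 0, 1), 0)],
    ![(1, (1, 0, 0), 1), (1, (0, 1, 0), 0), (1, (0, 0, 1), 0), (1, (0, 1, 1), 0)]]

/-- The value of a tree on the `q`-th test quadruple, permuted by `σ`. -/
def testWeight (q : Fin 5) (σ : Equiv.Perm (Fin 4)) (t : BTree 4) : ℤ :=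
  weight (t.eval markedComm (testUnits q ∘ σ))

/-- The permutations of `Fin 4` fixing `0`, as functions. -/
def fixZeroFun : Fin 6 → Fin 4 → Fin 4 :=
  ![![0, 1, 2, 3], ![0, 1, 3, 2], ![0, 2, 1, 3], ![0, 2, 3, 1], ![0, 3, 1, 2], ![0, 3, 2, 1]]

/-- The permutations of `Fin 4` fixing `0`. -/
def fixZero (j : Fin 6) : Equiv.Perm (Fin 4) where
  toFun := fixZeroFun j
  invFun := fixZeroFun (Equiv.swap 3 4 j)
  left_inv := by revert j; decide
  right_inv := by revert j; decide

lemma fixZero_injective : Function.Injective fixZero := by decide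

lemma mem_range_fixZero {σ : Equiv.Perm (Fin 4)} (h : σ 0 = 0) : σ ∈ Set.range fixZero := by
  revert σ; decide

lemma testWeight_eq_zero (q : Fin 5) {σ : Equiv.Perm (Fin 4)} (h : σ 0 ≠ 0) (s : Fin 5) :
    testWeight q σ (.shape id s) = 0 := by
  revert q σ s; decide +kernel

/-- The values of `testWeight` on the five association types, for the permutations inverse to
`fixZero j`. -/
def testWeightTable : Fin 5 → Fin 5 → Fin 6 → ℤ :=
  ![![![0, 0, -8, 8, 0, 0], ![0, 0, -8, 8, 8, -8], ![-8, 0, -8, 0, 0, 0],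
      ![8, -8, 8, 8, -8, 8], ![-8, 8, 8, -8, -8, 8]],
    ![![8, -8, -8, 8, 0, 0], ![8, -8, -8, 8, -8, 8], ![0, 0, 0, 0, 0, 0],
      ![0, 8, 0, -8, 8, -8], ![8, -8, -8, 8, 8, -8]],
    ![![0, 0, -8, 8, 8, -8], ![0, 0, 8, -8, -8, 8], ![-8, 8, -8, 0, 8, 0],
      ![-8, 8, -8, 0, 8, 0], ![8, -8, -8, 8, 8, -8]],
    ![![0, 0, 0, 0, 0, 0], ![-8, 8, 8, -8, -8, 8], ![0, 8, 0, -8, 8, -8],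
      ![0, -8, 0, 8, -8, 8], ![0, 0, 0, 0, 0, 0]],
    ![![0, 0, 0, 0, 0, 0], ![8, -8, -8, 8, 8, -8], ![-8, 8, -8, 0, 8, 0],
      ![8, -8, 8, 0, -8, 0], ![0, 0, 0, 0, 0, 0]]]

lemma testWeight_fixZero_inv (s q : Fin 5) (j : Fin 6) :
    testWeight q (fixZero j)⁻¹ (.shape id s) = testWeightTable s q j := by
  revert s q j; decide +kernel

lemma sum_testWeight_smul {M : Type} [AddCommGroup M] (s q : Fin 5)
    (g : (Fin 4 → M) → M) (y : Fin 4 → M) :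
    ∑ σ : Equiv.Perm (Fin 4), testWeight q σ⁻¹ (.shape id s) • g (y ∘ σ)
      = ∑ j, testWeightTable s q j • g (y ∘ fixZeroFun j) := by
  symm
  refine Fintype.sum_of_injective fixZero fixZero_injective _ _ (fun σ hσ => ?_) (fun j => ?_)
  · rw [testWeight_eq_zero, zero_smul]
    intro h
    exact hσ (mem_range_fixZero (Equiv.Perm.inv_eq_iff_eq.mp h).symm)
  · rw [testWeight_fixZero_inv]
    rfl

/-- The polynomials dual to the test quadruples, up to a factor. -/
def dualPoly {M : Type} [AddCommGroup M] (m : M → M → M) (q : Fin 5) (y : Fin 4 → M) : M :=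
  ![(-9 : ℤ) • m (m (m (y 0) (y 2)) (y 3)) (y 1) + (12 : ℤ) • m (m (m (y 0) (y 3)) (y 1)) (y 2)
      + (6 : ℤ) • m (m (y 0) (y 1)) (m (y 2) (y 3)) - (3 : ℤ) • m (m (y 0) (y 3)) (m (y 1) (y 2)),
    (3 : ℤ) • m (y 0) (m (m (y 1) (y 3)) (y 2)),
    (-6 : ℤ) • m (m (m (y 0) (y 1)) (y 3)) (y 2) + (9 : ℤ) • m (y 0) (m (m (y 1) (y 3)) (y 2)),
    (3 : ℤ) • m (m (m (y 0) (y 3)) (y 1)) (y 2) + (3 : ℤ) • m (m (y 0) (m (y 1) (y 3))) (y 2),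
    (2 : ℤ) • m (m (m (y 0) (y 1)) (y 3)) (y 2) + m (m (y 0) (y 3)) (m (y 1) (y 2))
      + (2 : ℤ) • m (y 0) (m (m (y 1) (y 3)) (y 2))] q

end Oct

section Malcev

open Oct

variable {K M : Type} [Field K] [AddCommGroup M] [Module K M] {f : M →ₗ[K] M →ₗ[K] M}

set_option maxHeartbeats 1000000 in
lemma eval_shape_eq_sum_dualPoly
    (hanti : ∀ a b c : M, f a (f b c) + f a (f c b) = 0)
    (hmal : ∀ a b c d : M,
      f (f (f a b) c) d - f (f (f a d) b) c - f (f a (f c d)) b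
        - f (f a c) (f b d) - f a (f (f b c) d) = 0)
    (y : Fin 4 → M) (s : Fin 5) :
    (144 : ℤ) • BTree.eval (fun a b => f a b) y (.shape id s)
      = ∑ q, ∑ j, testWeightTable s q j • dualPoly (fun a b => f a b) q (y ∘ fixZeroFun j) := by
  have swap_outer (a b c d : M) : f (f a (f b c)) d = -f (f a (f c b)) d := by
    rw [eq_neg_of_add_eq_zero_left (hanti a b c), map_neg, LinearMap.neg_apply]
  have swap_inner (a b c d : M) : f a (f (f b c) d) = -f a (f (f c b) d) := by
    have h := hanti a d (f b c)
    have h' := congrArg (f a) (hanti d b c)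
    have h'' := hanti a d (f c b)
    simp only [map_add, map_zero] at h'
    linear_combination (norm := module) h - h' + h''
  have rotate (a b c d : M) : f a (f b (f c d)) = -f a (f (f c d) b) :=
    eq_neg_of_add_eq_zero_left (hanti a b (f c d))
  have malcev (a b c d : M) : f (f a c) (f b d) = f (f (f a b) c) d - f (f (f a d) b) c
      - f (f a (f c d)) b - f a (f (f b c) d) := by
    linear_combination (norm := module) -hmal a b c d
  have symm_inner (a b c d : M) : f a (f (f c d) b) = f a (f (f b c) d)
      - (f (f (f a b) c) d - f (f (f a d) b) c - f (f a (f c d)) b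
        + f (f (f a d) c) b - f (f (f a b) d) c - f (f a (f c b)) d) := by
    have h := hanti (f a c) b d
    have h' := swap_inner a c d b
    rw [malcev a b c d, malcev a d c b] at h
    linear_combination (norm := module) h' + h
  fin_cases s <;>
  simp [BTree.shape, BTree.eval, Fin.sum_univ_succ, testWeightTable, dualPoly, fixZeroFun,
    -neg_smul, -smul_add]
  all_goals
    simp only [rotate, malcev, symm_inner (y 0) (y 1) (y 2) (y 3),
      symm_inner (y 0) (y 2) (y 3) (y 1), swap_outer (y 0) (y 2) (y 1),
      swap_outer (y 0) (y 3) (y 2), swap_outer (y 0) (y 1) (y 3),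
      swap_inner (y 0) (y 2) (y 1), swap_inner (y 0) (y 3) (y 2), swap_inner (y 0) (y 1) (y 3)]
    module

lemma eval_eq_sum_dualPoly
    (hanti : ∀ a b c : M, f a (f b c) + f a (f c b) = 0)
    (hmal : ∀ a b c d : M,
      f (f (f a b) c) d - f (f (f a d) b) c - f (f a (f c d)) b
        - f (f a c) (f b d) - f a (f (f b c) d) = 0)
    (x : Fin 4 → M) {t : BTree 4} (ht : t.Multilinear) :
    (144 : ℤ) • BTree.eval (fun a b => f a b) x t
      = ∑ q, ∑ σ : Equiv.Perm (Fin 4),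
          testWeight q σ⁻¹ t • dualPoly (fun a b => f a b) q (x ∘ σ) := by
  obtain ⟨p, s, rfl⟩ := ht.exists_perm
  rw [BTree.eval_shape_comp, eval_shape_eq_sum_dualPoly hanti hmal]
  refine Finset.sum_congr rfl fun q _ => ?_
  rw [← sum_testWeight_smul]
  refine Fintype.sum_equiv (Equiv.mulLeft p) _ _ fun σ => ?_
  have hcomp : (testUnits q ∘ ⇑(p * σ)⁻¹) ∘ ⇑p = testUnits q ∘ ⇑σ⁻¹ := by
    ext1 i
    simp [mul_inv_rev]
  rw [Equiv.coe_mulLeft, testWeight, testWeight, BTree.eval_shape_comp _ _ p, hcomp]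
  rfl

end Malcev

/-- An identity of the dicommutator in the octonion dialgebra gives linear relations between its
coefficients. -/
lemma Oct.sum_mul_weight_eq_zero {K : Type} [Field K] {n : ℕ} {P : BTree n →₀ K}
    (hP : ∀ x : Fin n → Oct K × Oct K,
      P.sum (fun t k => k • BTree.eval (fun a b => left a b - right b a) x t) = 0)
    (y : Fin n → MarkedUnit) :
    P.sum (fun t k => k * (weight (t.eval markedComm y) : K)) = 0 := by
  have h := congrArg (fun z : Oct K × Oct K => Finsupp.linearCombination K (fun _ => (1 : K)) z.2)
    (hP fun i => ofMarkedUnit (y i))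
  simp only [eval_dicommutator] at h
  simpa [Finsupp.sum, Prod.snd_sum, ofMarkedUnit, -Finsupp.single_mul] using h

/-- Over a field `K` of characteristic not 2 and not 3, every multilinear polynomial identity `P` of degree 4 satisfied by the dicommutator in every alternative dialgebra over `K` is satisfied in every Malcev dialgebra over `K`; that is, `P` is a consequence of right anticommutativity and the di-Malcev identity. -/
theorem degree4_dicommutator_identities (K : Type) [Field K]
    (h2 : (2 : K) ≠ 0) (h3 : (3 : K) ≠ 0)
    (P : BTree 4 →₀ K) (hml : ∀ t ∈ P.support, t.Multilinear)
    (hvanish : ∀ (D : Type) [AddCommGroup D] [Module K D]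
      (l r : D →ₗ[K] D →ₗ[K] D),
      (∀ a b c : D, r (l a b) c = r (r a b) c) →
      (∀ a b c : D, l a (l b c) = l a (r b c)) →
      (∀ a b c : D, (l (l a b) c - l a (l b c)) + (r (r c b) a - r c (r b a)) = 0) →
      (∀ a b c : D, (l (l a b) c - l a (l b c)) - (r (r b c) a - r b (r c a)) = 0) →
      (∀ a b c : D, (l (r a b) c - r a (l b c)) + (r (r a c) b - r a (r c b)) = 0) →
      ∀ x : Fin 4 → D,
        P.sum (fun t k => k • BTree.eval (fun a b => l a b - r b a) x t) = 0) :
    ∀ (M : Type) [AddCommGroup M] [Module K M] (f : M →ₗ[K] M →ₗ[K] M),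
      (∀ a b c : M, f a (f b c) + f a (f c b) = 0) →
      (∀ a b c d : M,
        f (f (f a b) c) d - f (f (f a d) b) c - f (f a (f c d)) b
          - f (f a c) (f b d) - f a (f (f b c) d) = 0) →
      ∀ x : Fin 4 → M,
        P.sum (fun t k => k • BTree.eval (fun a b => f a b) x t) = 0 := by
  intro M _ _ f hanti hmal x
  have hweight := Oct.sum_mul_weight_eq_zero (hvanish (Oct K × Oct K) Oct.left Oct.right
    (fun _ _ _ => rfl) (fun _ _ _ => rfl) Oct.assoc_left_add_assoc_right
    Oct.assoc_left_sub_assoc_right Oct.assoc_inner_add_assoc_right)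
  have h144 : (144 : K) ≠ 0 := by
    rw [show (144 : K) = 2 ^ 4 * 3 ^ 2 by norm_num]
    exact mul_ne_zero (pow_ne_zero _ h2) (pow_ne_zero _ h3)
  refine (smul_eq_zero_iff_right h144).mp ?_
  calc (144 : K) • P.sum (fun t k => k • BTree.eval (fun a b => f a b) x t)
      = P.sum (fun t k => k • (144 : ℤ) • BTree.eval (fun a b => f a b) x t) := by
        rw [Finsupp.smul_sum]
        exact Finsupp.sum_congr fun t _ => by module
    _ = P.sum (fun t k => ∑ q, ∑ σ : Equiv.Perm (Fin 4),
          (k * (Oct.testWeight q σ⁻¹ t : K)) • Oct.dualPoly (fun a b => f a b) q (x ∘ σ)) := by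
        refine Finsupp.sum_congr fun t ht => ?_
        simp only [eval_eq_sum_dualPoly hanti hmal x (hml t ht), Finset.smul_sum, mul_smul,
          Int.cast_smul_eq_zsmul]
    _ = ∑ q, ∑ σ : Equiv.Perm (Fin 4), P.sum (fun t k => k * (Oct.testWeight q σ⁻¹ t : K))
          • Oct.dualPoly (fun a b => f a b) q (x ∘ σ) := by
        simp only [Finsupp.sum, Finset.sum_smul]
        rw [Finset.sum_comm]
        exact Finset.sum_congr rfl fun q _ => Finset.sum_comm
    _ = 0 := Finset.sum_eq_zero fun q _ => Finset.sum_eq_zero fun σ _ => by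
        rw [show P.sum (fun t k => k * (Oct.testWeight q σ⁻¹ t : K)) = 0 from hweight _,
          zero_smul]
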